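/- Let N ≥ 1, p ∈ [1, ∞), and s ∈ (0,1) be such that N > sp. Then for every u ∈ C_c^∞(ℝ^N), ∫_{ℝ^N} |u(x)|^p / |x|^{sp} dx ≤ Λ_{N,s,p} ∫_{ℝ^N} ∫_{ℝ^N} |u(x) − u(y)|^p / |x−y|^{N+sp} dx dy. -/

import Mathlib

open MeasureTheory Metric Set

noncomputable section

/-- The surface measure on the unit sphere `S^{N-1} ⊆ ℝ^N` induced by the Lebesgue measure. -/
def sphereMeasure (N : ℕ) : Measure (sphere (0 : EuclideanSpace ℝ (Fin N)) 1) :=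
  (volume : Measure (EuclideanSpace ℝ (Fin N))).toSphere

open Classical in
/-- Extension of a function `g` on the unit sphere to `ℝ^N` as `x ↦ g (x/|x|)`
(with junk value `0` at the origin). -/
def sphereExt {N : ℕ} (g : sphere (0 : EuclideanSpace ℝ (Fin N)) 1 → ℝ)
    (x : EuclideanSpace ℝ (Fin N)) : ℝ :=
  if hx : ‖x‖⁻¹ • x ∈ sphere (0 : EuclideanSpace ℝ (Fin N)) 1 then g ⟨‖x‖⁻¹ • x, hx⟩ else 0

/-- The `L^q(S^{N-1})` norm `(∫_{S^{N-1}} |g|^q dθ)^{1/q}`. -/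
def sphereLqNorm {N : ℕ} (q : ℝ) (g : sphere (0 : EuclideanSpace ℝ (Fin N)) 1 → ℝ) : ℝ :=
  (∫ θ, |g θ| ^ q ∂(sphereMeasure N)) ^ (1 / q)

/-- The total surface measure `|S^{N-1}|` of the unit sphere in `ℝ^N`. -/
def sphereVol (N : ℕ) : ℝ := (sphereMeasure N univ).toReal

/-- The kernel `Ψ_{N,s,p}(r)` from the sharp fractional Hardy inequality of
Frank and Seiringer. -/
def fracPsi (N : ℕ) (s p r : ℝ) : ℝ :=
  if N = 1 then (1 - r) ^ (-(1 + s * p)) + (1 + r) ^ (-(1 + s * p))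
  else sphereVol (N - 1) *
    ∫ t in Ioo (-1 : ℝ) 1,
      (1 - t ^ 2) ^ (((N : ℝ) - 3) / 2) / (1 - 2 * r * t + r ^ 2) ^ (((N : ℝ) + s * p) / 2)

/-- The sharp fractional Hardy constant `Λ_{N,s,p}`. -/
def fracLambda (N : ℕ) (s p : ℝ) : ℝ :=
  (2 * ∫ r in Ioo (0 : ℝ) 1,
      r ^ (s * p - 1) * |1 - r ^ (((N : ℝ) - s * p) / p)| ^ p * fracPsi N s p r)⁻¹

/-- The pushforward of the surface measure of `S^{N-1}` under `θ ↦ ⟨e, θ⟩` for a unit vector `e`. -/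
def heightMeasure (N : ℕ) : Measure ℝ :=
  if N = 1 then Measure.dirac 1 + Measure.dirac (-1)
  else ENNReal.ofReal (sphereVol (N - 1)) • (volume.restrict (Ioo (-1 : ℝ) 1)).withDensity
    (fun t => ENNReal.ofReal ((1 - t ^ 2) ^ (((N : ℝ) - 3) / 2)))

/-- Polar coordinates for functions of the norm. -/
lemma lintegral_comp_norm (n : ℕ) [NeZero n] (G : ℝ → ENNReal) (hG : Measurable G) :
    ∫⁻ w : EuclideanSpace ℝ (Fin n), G ‖w‖ =
      ENNReal.ofReal (sphereVol n) *
        ∫⁻ τ in Ioi (0 : ℝ), ENNReal.ofReal (τ ^ (n - 1)) * G τ := by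
  set E := EuclideanSpace ℝ (Fin n)
  have hd : Module.finrank ℝ E = n := by simp [E]
  have hv : ENNReal.ofReal (sphereVol n) = (volume : Measure E).toSphere univ := by
    rw [sphereVol, sphereMeasure, ENNReal.ofReal_toReal (measure_ne_top _ _)]
  calc
    ∫⁻ x : E, G ‖x‖ = ∫⁻ x : ({(0)}ᶜ : Set E), G ‖x.1‖ ∂(volume.comap Subtype.val) := by
      rw [lintegral_subtype_comap (measurableSet_singleton _).compl (fun x : E ↦ G ‖x‖),
        restrict_compl_singleton]
    _ = ∫⁻ x, G x.2 ∂(volume : Measure E).toSphere.prod (.volumeIoiPow (Module.finrank ℝ E - 1)) := by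
      simpa using (volume : Measure E).measurePreserving_homeomorphUnitSphereProd.lintegral_comp_emb
        (Homeomorph.measurableEmbedding _) (G ∘ Subtype.val ∘ Prod.snd)
    _ = _ := by
      rw [lintegral_prod _ (by fun_prop)]
      simp only
      rw [lintegral_const, mul_comm, hv, hd]
      congr 1
      rw [Measure.volumeIoiPow, lintegral_withDensity_eq_lintegral_mul _ (by fun_prop) (by fun_prop)]
      exact lintegral_subtype_comap measurableSet_Ioi
        (fun τ : ℝ => ENNReal.ofReal (τ ^ (n - 1)) * G τ)

/-- Rotating a unit vector to the first coordinate axis. -/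
lemma lintegral_inner_norm_eq (n : ℕ) (e : EuclideanSpace ℝ (Fin (n + 1))) (he : ‖e‖ = 1)
    (F : ℝ × ℝ → ENNReal) (hF : Measurable F) :
    ∫⁻ y : EuclideanSpace ℝ (Fin (n + 1)), F (inner ℝ e y, ‖y‖) =
      ∫⁻ a : ℝ, ∫⁻ w : EuclideanSpace ℝ (Fin n), F (a, √(a ^ 2 + ‖w‖ ^ 2)) := by
  have ho : Orthonormal ℝ (({0} : Set (Fin (n + 1))).domRestrict
      (fun _ => e)) := by
    constructor
    · exact fun _ => he
    · intro i j hij; exact absurd (Subsingleton.elim i j) hij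
  obtain ⟨b, hb⟩ := ho.exists_orthonormalBasis_extension_of_card_eq (by simp)
  have hb0 : b 0 = e := hb 0 rfl
  have h1 : ∫⁻ y : EuclideanSpace ℝ (Fin (n + 1)), F (inner ℝ e y, ‖y‖) =
      ∫⁻ z : EuclideanSpace ℝ (Fin (n + 1)), F (z 0, ‖z‖) := by
    rw [← b.measurePreserving_repr.lintegral_comp
      (f := fun z : EuclideanSpace ℝ (Fin (n + 1)) => F (z 0, ‖z‖)) (by fun_prop)]
    simp [b.repr_apply_apply, hb0]
  rw [h1, ← (PiLp.volume_preserving_toLp (Fin (n + 1))).lintegral_comp (by fun_prop),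
    ← (volume_preserving_piFinSuccAbove (fun _ : Fin (n + 1) => ℝ) 0).symm.lintegral_comp
      (by fun_prop), Measure.volume_eq_prod, lintegral_prod _ (by fun_prop)]
  refine lintegral_congr fun a => ?_
  rw [← (PiLp.volume_preserving_toLp (Fin n)).lintegral_comp (by fun_prop)]
  refine lintegral_congr fun w => ?_
  simp [EuclideanSpace.norm_eq, Fin.sum_univ_succ, Real.sq_sqrt, Finset.sum_nonneg, sq_nonneg]

lemma lintegral_sin_comp_cos (n : ℕ) (h : ℝ → ENNReal) :
    ∫⁻ φ in Ioo 0 Real.pi, ENNReal.ofReal (Real.sin φ ^ n) * h (Real.cos φ) =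
      ∫⁻ t in Ioo (-1 : ℝ) 1, ENNReal.ofReal ((1 - t ^ 2) ^ (((n : ℝ) - 1) / 2)) * h t := by
  have himg : Real.cos '' Ioo 0 Real.pi = Ioo (-1) 1 := by
    ext t
    constructor
    · rintro ⟨φ, hφ, rfl⟩
      have h1 := Real.strictAntiOn_cos ⟨le_rfl, Real.pi_pos.le⟩ ⟨hφ.1.le, hφ.2.le⟩ hφ.1
      have h2 := Real.strictAntiOn_cos ⟨hφ.1.le, hφ.2.le⟩ ⟨Real.pi_pos.le, le_rfl⟩ hφ.2
      simp only [Real.cos_zero, Real.cos_pi] at h1 h2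
      exact ⟨h2, h1⟩
    · intro ht
      refine ⟨Real.arccos t, ⟨Real.arccos_pos.2 ht.2, ?_⟩, Real.cos_arccos ht.1.le ht.2.le⟩
      refine lt_of_le_of_ne (Real.arccos_le_pi t) fun h => ?_
      have := Real.arccos_eq_pi.1 h
      linarith [ht.1]
  rw [← himg, lintegral_image_eq_lintegral_abs_deriv_mul measurableSet_Ioo
    (fun x _ => (Real.hasDerivAt_cos x).hasDerivWithinAt)
    (Real.injOn_cos.mono Ioo_subset_Icc_self)]
  refine setLIntegral_congr_fun measurableSet_Ioo fun φ hφ => ?_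
  have hs := Real.sin_pos_of_pos_of_lt_pi hφ.1 hφ.2
  rw [← mul_assoc, ← ENNReal.ofReal_mul (abs_nonneg _), abs_neg, abs_of_pos hs,
    ← Real.sin_sq, ← Real.rpow_natCast (Real.sin φ) 2, ← Real.rpow_mul hs.le]
  nth_rw 2 [← Real.rpow_one (Real.sin φ)]
  rw [← Real.rpow_add hs, ← Real.rpow_natCast]
  congr 4
  push_cast; ring

/-- Polar coordinates in the upper half plane. -/
lemma lintegral_halfPlane_polar (f : ℝ × ℝ → ENNReal) (hf : Measurable f) :
    ∫⁻ a : ℝ, ∫⁻ τ in Ioi (0 : ℝ), f (a, τ) =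
      ∫⁻ r in Ioi (0 : ℝ), ∫⁻ φ in Ioo 0 Real.pi,
        ENNReal.ofReal r * f (r * Real.cos φ, r * Real.sin φ) := by
  set g : ℝ × ℝ → ENNReal := (Prod.snd ⁻¹' Ioi (0 : ℝ)).indicator f with hg
  have hgm : Measurable g := hf.indicator (measurable_snd measurableSet_Ioi)
  have h1 : ∫⁻ a : ℝ, ∫⁻ τ in Ioi (0 : ℝ), f (a, τ) = ∫⁻ z : ℝ × ℝ, g z := by
    rw [Measure.volume_eq_prod, lintegral_prod _ hgm.aemeasurable]
    refine lintegral_congr fun a => ?_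
    rw [← lintegral_indicator measurableSet_Ioi]
    rfl
  have hgp : Measurable fun z : ℝ × ℝ =>
      ENNReal.ofReal z.1 * g (z.1 * Real.cos z.2, z.1 * Real.sin z.2) := by
    fun_prop
  rw [h1, ← lintegral_comp_polarCoord_symm, polarCoord_target, Measure.volume_eq_prod,
    ← Measure.prod_restrict]
  simp only [polarCoord_symm_apply, smul_eq_mul]
  rw [lintegral_prod _ hgp.aemeasurable]
  refine setLIntegral_congr_fun measurableSet_Ioi fun r hr => ?_
  simp only
  rw [← lintegral_indicator measurableSet_Ioo, ← lintegral_indicator measurableSet_Ioo]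
  refine lintegral_congr fun φ => ?_
  have hr : 0 < r := hr
  by_cases h : φ ∈ Ioo 0 Real.pi
  · have h' : φ ∈ Ioo (-Real.pi) Real.pi := ⟨by linarith [h.1, Real.pi_pos], h.2⟩
    have hs : 0 < r * Real.sin φ := mul_pos hr (Real.sin_pos_of_pos_of_lt_pi h.1 h.2)
    rw [indicator_of_mem h, indicator_of_mem h']
    simp [hg, hs]
  · rw [indicator_of_notMem h]
    by_cases h' : φ ∈ Ioo (-Real.pi) Real.pi
    · have h0 : φ ≤ 0 := by
        by_contra! h0
        exact h ⟨h0, h'.2⟩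
      have hs : ¬ 0 < r * Real.sin φ := by
        rw [not_lt]
        exact mul_nonpos_of_nonneg_of_nonpos hr.le
          (Real.sin_nonpos_of_nonpos_of_neg_pi_le h0 h'.1.le)
      simp [hg, indicator, hs]
    · rw [indicator_of_notMem h']

/-- Integration of an axially symmetric function over `ℝ^N` in polar coordinates. -/
lemma lintegral_inner_norm_polar (N : ℕ) (hN : 1 ≤ N) (e : EuclideanSpace ℝ (Fin N))
    (he : ‖e‖ = 1) (F : ℝ × ℝ → ENNReal) (hF : Measurable F) :
    ∫⁻ y : EuclideanSpace ℝ (Fin N), F (inner ℝ e y, ‖y‖) =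
      ∫⁻ r in Ioi (0 : ℝ), ENNReal.ofReal (r ^ (N - 1)) *
        ∫⁻ t, F (r * t, r) ∂(heightMeasure N) := by
  obtain ⟨n, rfl⟩ : ∃ n, N = n + 1 := ⟨N - 1, by omega⟩
  rw [lintegral_inner_norm_eq n e he F hF]
  rcases Nat.eq_zero_or_pos n with rfl | hn
  · have hw : ∀ w : EuclideanSpace ℝ (Fin 0), ‖w‖ = 0 := fun w => by
      rw [Subsingleton.elim w 0, norm_zero]
    have hv : (volume : Measure (EuclideanSpace ℝ (Fin 0))) univ = 1 := by
      have := (PiLp.volume_preserving_toLp (Fin 0)).measure_preimage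
        (s := univ) MeasurableSet.univ.nullMeasurableSet
      rw [← this, preimage_univ, volume_pi, Measure.pi_univ]
      simp
    simp only [hw, lintegral_const, hv, heightMeasure]
    have hm : Measurable fun a : ℝ => F (a, |a|) := by fun_prop
    have hneg : ∫⁻ a in Iic (0 : ℝ), F (a, |a|) = ∫⁻ a in Ioi (0 : ℝ), F (-a, |a|) := by
      have h := (Measure.measurePreserving_neg (volume : Measure ℝ)).setLIntegral_comp_preimage
        (measurableSet_Iio (a := (0 : ℝ))) hm
      rw [setLIntegral_congr Iio_ae_eq_Iic.symm, ← h]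
      simp
    rw [← lintegral_add_compl _ (measurableSet_Ioi (a := (0 : ℝ))), compl_Ioi]
    simp only [ne_eq, OfNat.ofNat_ne_zero, not_false_eq_true, zero_pow, add_zero, mul_one,
      Real.sqrt_sq_eq_abs, zero_add, if_true, tsub_self, pow_zero, ENNReal.ofReal_one, one_mul]
    rw [hneg, ← lintegral_add_left (by fun_prop)]
    refine setLIntegral_congr_fun measurableSet_Ioi fun r hr => ?_
    have hr : 0 < r := hr
    rw [lintegral_add_measure, lintegral_dirac' _ (by fun_prop), lintegral_dirac' _ (by fun_prop),
      abs_of_pos hr]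
    simp
  · have : NeZero n := ⟨hn.ne'⟩
    have h1 : ∀ a : ℝ, ∫⁻ w : EuclideanSpace ℝ (Fin n), F (a, √(a ^ 2 + ‖w‖ ^ 2)) =
        ENNReal.ofReal (sphereVol n) * ∫⁻ τ in Ioi (0 : ℝ),
          ENNReal.ofReal (τ ^ (n - 1)) * F (a, √(a ^ 2 + τ ^ 2)) := fun a =>
      lintegral_comp_norm n (fun τ => F (a, √(a ^ 2 + τ ^ 2))) (by fun_prop)
    have hm : Measurable fun z : ℝ × ℝ =>
        ENNReal.ofReal (z.2 ^ (n - 1)) * F (z.1, √(z.1 ^ 2 + z.2 ^ 2)) := by fun_prop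
    simp only [h1]
    rw [lintegral_const_mul' _ _ ENNReal.ofReal_ne_top,
      lintegral_halfPlane_polar (fun z : ℝ × ℝ =>
        ENNReal.ofReal (z.2 ^ (n - 1)) * F (z.1, √(z.1 ^ 2 + z.2 ^ 2))) hm,
      ← lintegral_const_mul' _ _ ENNReal.ofReal_ne_top]
    refine setLIntegral_congr_fun measurableSet_Ioi fun r hr => ?_
    have hr : 0 < r := hr
    have hdens : Measurable fun t : ℝ =>
        ENNReal.ofReal ((1 - t ^ 2) ^ ((((n + 1 : ℕ) : ℝ) - 3) / 2)) := by fun_prop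
    have hne : n + 1 ≠ 1 := by omega
    simp only [heightMeasure, hne, if_false, Nat.add_sub_cancel]
    rw [lintegral_smul_measure, lintegral_withDensity_eq_lintegral_mul _ hdens (by fun_prop),
      smul_eq_mul, mul_left_comm]
    congr 1
    have he : ((((n + 1 : ℕ) : ℝ) - 3) / 2) = (((n - 1 : ℕ) : ℝ) - 1) / 2 := by
      rw [Nat.cast_sub hn]; push_cast; ring
    simp only [Pi.mul_apply, he]
    rw [← lintegral_sin_comp_cos (n - 1) (fun t => F (r * t, r)),
      ← lintegral_const_mul' _ _ ENNReal.ofReal_ne_top]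
    refine setLIntegral_congr_fun measurableSet_Ioo fun φ hφ => ?_
    have hs := Real.sin_pos_of_pos_of_lt_pi hφ.1 hφ.2
    have hsq : √((r * Real.cos φ) ^ 2 + (r * Real.sin φ) ^ 2) = r := by
      rw [show (r * Real.cos φ) ^ 2 + (r * Real.sin φ) ^ 2 = r ^ 2 by
        rw [mul_pow, mul_pow, ← mul_add, Real.cos_sq_add_sin_sq, mul_one], Real.sqrt_sq hr.le]
    simp only [hsq]
    rw [← mul_assoc, ← mul_assoc, ← ENNReal.ofReal_mul hr.le, ← ENNReal.ofReal_mul (by positivity)]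
    congr 2
    rw [mul_pow, ← mul_assoc]
    congr 1
    rw [← pow_succ', Nat.sub_add_cancel hn]

lemma heightMeasure_ae_mem (N : ℕ) : ∀ᵐ t ∂(heightMeasure N), t ∈ Icc (-1 : ℝ) 1 := by
  unfold heightMeasure
  split_ifs with h
  · rw [ae_add_measure_iff]
    constructor <;> exact (ae_dirac_iff measurableSet_Icc).2 (by norm_num)
  · refine Measure.ae_smul_measure ?_ _
    refine (withDensity_absolutelyContinuous _ _).ae_le ?_
    filter_upwards [ae_restrict_mem measurableSet_Ioo] with t ht using ⟨ht.1.le, ht.2.le⟩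

lemma lintegral_comp_norm_heightMeasure (N : ℕ) (hN : 1 ≤ N) (G : ℝ → ENNReal)
    (hG : Measurable G) :
    ∫⁻ y : EuclideanSpace ℝ (Fin N), G ‖y‖ =
      (∫⁻ r in Ioi (0 : ℝ), ENNReal.ofReal (r ^ (N - 1)) * G r) * heightMeasure N univ := by
  have he : ‖EuclideanSpace.single (⟨0, hN⟩ : Fin N) (1 : ℝ)‖ = 1 := by simp
  have h := lintegral_inner_norm_polar N hN _ he (fun z => G z.2) (by fun_prop)
  simp only [lintegral_const] at h
  rw [h, ← lintegral_mul_const _ (by fun_prop)]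
  simp only [mul_assoc]

lemma heightMeasure_univ_ne (N : ℕ) (hN : 1 ≤ N) :
    heightMeasure N univ ≠ 0 ∧ heightMeasure N univ ≠ ⊤ := by
  have h := lintegral_comp_norm_heightMeasure N hN ((Iio 1).indicator 1)
    (measurable_one.indicator measurableSet_Iio)
  have h1 : ∫⁻ y : EuclideanSpace ℝ (Fin N), (Iio (1 : ℝ)).indicator (1 : ℝ → ENNReal) ‖y‖ =
      volume (ball (0 : EuclideanSpace ℝ (Fin N)) 1) := by
    rw [← lintegral_indicator_one measurableSet_ball]
    refine lintegral_congr fun y => ?_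
    simp [indicator]
  rw [h1] at h
  have hpos : volume (ball (0 : EuclideanSpace ℝ (Fin N)) 1) ≠ 0 :=
    (measure_ball_pos _ _ one_pos).ne'
  have hfin : volume (ball (0 : EuclideanSpace ℝ (Fin N)) 1) ≠ ⊤ := measure_ball_lt_top.ne
  refine ⟨fun h0 => hpos (by rw [h, h0, mul_zero]), fun h0 => ?_⟩
  rw [h0] at h
  by_cases hc : ∫⁻ r in Ioi (0 : ℝ), ENNReal.ofReal (r ^ (N - 1)) *
      (Iio (1 : ℝ)).indicator (1 : ℝ → ENNReal) r = 0
  · exact hpos (by rw [h, hc, zero_mul])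
  · exact hfin (by rw [h, ENNReal.mul_top hc])

/-- The kernel `Ψ` as an extended nonnegative number. -/
def psiKernel (N : ℕ) (q r : ℝ) : ENNReal :=
  ∫⁻ t, ENNReal.ofReal ((1 - 2 * r * t + r ^ 2) ^ (-(((N : ℝ) + q) / 2))) ∂(heightMeasure N)

lemma sq_one_sub_le {r t : ℝ} (hr : 0 ≤ r) (ht : t ∈ Icc (-1 : ℝ) 1) :
    (1 - r) ^ 2 ≤ 1 - 2 * r * t + r ^ 2 := by
  nlinarith [mul_nonneg hr (sub_nonneg.2 ht.2)]

lemma isFiniteMeasure_heightMeasure (N : ℕ) (hN : 1 ≤ N) : IsFiniteMeasure (heightMeasure N) :=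
  ⟨lt_top_iff_ne_top.2 (heightMeasure_univ_ne N hN).2⟩

lemma measurable_psiKernel (N : ℕ) (hN : 1 ≤ N) (q : ℝ) : Measurable (psiKernel N q) := by
  have := isFiniteMeasure_heightMeasure N hN
  exact Measurable.lintegral_prod_right' (f := fun z : ℝ × ℝ =>
    ENNReal.ofReal ((1 - 2 * z.1 * z.2 + z.1 ^ 2) ^ (-(((N : ℝ) + q) / 2)))) (by fun_prop)

lemma lintegral_scaled_psiKernel (N : ℕ) (q : ℝ) {c r : ℝ} (hc : 0 < c) (hr : 0 ≤ r) :
    ∫⁻ t, ENNReal.ofReal ((c ^ 2 * (1 - 2 * r * t + r ^ 2)) ^ (-(((N : ℝ) + q) / 2)))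
      ∂(heightMeasure N) = ENNReal.ofReal (c ^ (-((N : ℝ) + q))) * psiKernel N q r := by
  rw [psiKernel, ← lintegral_const_mul' _ _ ENNReal.ofReal_ne_top]
  refine lintegral_congr_ae ?_
  filter_upwards [heightMeasure_ae_mem N] with t ht
  have hz : 0 ≤ 1 - 2 * r * t + r ^ 2 := (sq_nonneg _).trans (sq_one_sub_le hr ht)
  rw [← ENNReal.ofReal_mul (by positivity), Real.mul_rpow (by positivity) hz,
    ← Real.rpow_natCast c 2, ← Real.rpow_mul hc.le]
  congr 3
  push_cast; ring

lemma psiKernel_inv (N : ℕ) (q : ℝ) {r : ℝ} (hr : 0 < r) :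
    psiKernel N q r⁻¹ = ENNReal.ofReal (r ^ ((N : ℝ) + q)) * psiKernel N q r := by
  have h := lintegral_scaled_psiKernel N q (c := r⁻¹) (inv_pos.2 hr) hr.le
  rw [Real.inv_rpow hr.le, Real.rpow_neg hr.le, inv_inv] at h
  rw [← h, psiKernel]
  refine lintegral_congr fun t => ?_
  congr 2
  field_simp
  ring

lemma psiKernel_le (N : ℕ) {q r δ : ℝ} (hq : 0 ≤ q) (hr : 0 ≤ r) (hrδ : r ≤ δ) (hδ : δ < 1) :
    psiKernel N q r ≤ ENNReal.ofReal ((1 - δ) ^ (-((N : ℝ) + q))) * heightMeasure N univ := by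
  rw [psiKernel, ← lintegral_const]
  refine lintegral_mono_ae ?_
  filter_upwards [heightMeasure_ae_mem N] with t ht
  have h1 := sq_one_sub_le hr ht
  have h0 : 0 < 1 - δ := by linarith
  have h2 : (1 - δ) ^ 2 ≤ (1 - r) ^ 2 := by gcongr
  refine ENNReal.ofReal_le_ofReal ?_
  calc (1 - 2 * r * t + r ^ 2) ^ (-(((N : ℝ) + q) / 2))
      ≤ ((1 - δ) ^ 2) ^ (-(((N : ℝ) + q) / 2)) :=
        Real.rpow_le_rpow_of_nonpos (by positivity) (h2.trans h1)
          (neg_nonpos.2 (by positivity))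
    _ = (1 - δ) ^ (-((N : ℝ) + q)) := by
        rw [← Real.rpow_natCast (1 - δ) 2, ← Real.rpow_mul h0.le]
        congr 1
        push_cast; ring

lemma psiKernel_ne_zero (N : ℕ) (hN : 1 ≤ N) (q : ℝ) {r : ℝ} (hr : 0 ≤ r) (hr1 : r < 1) :
    psiKernel N q r ≠ 0 := by
  intro h
  rw [psiKernel, lintegral_eq_zero_iff (by fun_prop)] at h
  have hF : ∀ᵐ t ∂(heightMeasure N), False := by
    filter_upwards [h, heightMeasure_ae_mem N] with t h0 ht
    have h1 := sq_one_sub_le hr ht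
    have h2 : 0 < (1 - r) ^ 2 := by have := sub_pos.2 hr1; positivity
    have h3 := Real.rpow_pos_of_pos (h2.trans_le h1) (-(((N : ℝ) + q) / 2))
    simp only [Pi.zero_apply, ENNReal.ofReal_eq_zero] at h0
    linarith
  rw [ae_iff] at hF
  exact (heightMeasure_univ_ne N hN).1 (by simpa using hF)

lemma fracPsi_eq_toReal (N : ℕ) (hN : 1 ≤ N) (s p : ℝ) {r : ℝ} (hr : r ∈ Ioo (0 : ℝ) 1) :
    fracPsi N s p r = (psiKernel N (s * p) r).toReal := by
  unfold fracPsi psiKernel heightMeasure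
  split_ifs with h
  · subst h
    rw [lintegral_add_measure, lintegral_dirac' _ (by fun_prop), lintegral_dirac' _ (by fun_prop),
      ← ENNReal.ofReal_add (by apply Real.rpow_nonneg; nlinarith [sq_nonneg (1 - r)])
        (by apply Real.rpow_nonneg; nlinarith [sq_nonneg (1 + r)]),
      show 1 - 2 * r * 1 + r ^ 2 = (1 - r) ^ 2 by ring,
      show 1 - 2 * r * -1 + r ^ 2 = (1 + r) ^ 2 by ring]
    have h1 : 0 < 1 - r := sub_pos.2 hr.2
    have h2 : 0 < 1 + r := by linarith [hr.1]
    rw [ENNReal.toReal_ofReal (by positivity), ← Real.rpow_natCast, ← Real.rpow_natCast,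
      ← Real.rpow_mul h1.le, ← Real.rpow_mul h2.le]
    congr 2 <;> (push_cast; ring)
  · rw [lintegral_smul_measure, lintegral_withDensity_eq_lintegral_mul _ (by fun_prop)
      (by fun_prop), smul_eq_mul, ENNReal.toReal_mul,
      ENNReal.toReal_ofReal (by exact ENNReal.toReal_nonneg)]
    congr 1
    rw [integral_eq_lintegral_of_nonneg_ae]
    · congr 1
      refine setLIntegral_congr_fun measurableSet_Ioo fun t ht => ?_
      have hz : 0 ≤ 1 - 2 * r * t + r ^ 2 :=
        (sq_nonneg _).trans (sq_one_sub_le hr.1.le ⟨ht.1.le, ht.2.le⟩)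
      have hz' : 0 ≤ 1 - t ^ 2 := by nlinarith [ht.1, ht.2]
      simp only [Pi.mul_apply]
      rw [← ENNReal.ofReal_mul (by positivity), Real.rpow_neg hz, div_eq_mul_inv]
    · filter_upwards [ae_restrict_mem measurableSet_Ioo] with t ht
      have hz : 0 ≤ 1 - 2 * r * t + r ^ 2 :=
        (sq_nonneg _).trans (sq_one_sub_le hr.1.le ⟨ht.1.le, ht.2.le⟩)
      have hz' : 0 ≤ 1 - t ^ 2 := by nlinarith [ht.1, ht.2]
      simp only [Pi.zero_apply]
      positivity
    · exact (Measurable.aestronglyMeasurable (by fun_prop))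

/-- Integrating a function of `‖y‖ / ‖x‖` against the kernel `‖x - y‖ ^ (-(N + q))`. -/
lemma lintegral_ratio_kernel (N : ℕ) (hN : 1 ≤ N) (q : ℝ) (g : ℝ → ENNReal) (hg : Measurable g)
    {x : EuclideanSpace ℝ (Fin N)} (hx : x ≠ 0) :
    ∫⁻ y, g (‖y‖ / ‖x‖) * ENNReal.ofReal (‖x - y‖ ^ (-((N : ℝ) + q))) =
      ENNReal.ofReal (‖x‖ ^ (-q)) *
        ∫⁻ r in Ioi (0 : ℝ), ENNReal.ofReal (r ^ (N - 1)) * g r * psiKernel N q r := by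
  have hR : 0 < ‖x‖ := norm_pos_iff.2 hx
  set R := ‖x‖ with hRdef
  have he : ‖R⁻¹ • x‖ = 1 := by
    rw [norm_smul, norm_inv, norm_norm, ← hRdef, inv_mul_cancel₀ hR.ne']
  have hk : ∀ y, ‖x - y‖ ^ (-((N : ℝ) + q)) =
      (R ^ 2 - 2 * R * inner ℝ (R⁻¹ • x) y + ‖y‖ ^ 2) ^ (-(((N : ℝ) + q) / 2)) := fun y => by
    have h1 : R ^ 2 - 2 * R * inner ℝ (R⁻¹ • x) y + ‖y‖ ^ 2 = ‖x - y‖ ^ 2 := by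
      rw [norm_sub_sq_real, real_inner_smul_left, ← hRdef]
      field_simp
    rw [h1, ← Real.rpow_natCast ‖x - y‖ 2, ← Real.rpow_mul (norm_nonneg _)]
    congr 1
    push_cast; ring
  have himg : (fun r => R * r) '' Ioi (0 : ℝ) = Ioi 0 := by
    rw [image_const_mul_Ioi_zero hR]
  have hpol := lintegral_inner_norm_polar N hN _ he (fun z : ℝ × ℝ => g (z.2 / R) *
    ENNReal.ofReal ((R ^ 2 - 2 * R * z.1 + z.2 ^ 2) ^ (-(((N : ℝ) + q) / 2)))) (by fun_prop)
  simp only [hk]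
  rw [hpol]
  conv_lhs => rw [← himg]
  rw [lintegral_image_eq_lintegral_abs_deriv_mul measurableSet_Ioi
    (f := fun r => R * r) (f' := fun _ => R)
    (fun r _ => by simpa using ((hasDerivAt_id r).const_mul R).hasDerivWithinAt)
    (mul_right_injective₀ hR.ne').injOn, ← lintegral_const_mul' _ _ ENNReal.ofReal_ne_top]
  refine setLIntegral_congr_fun measurableSet_Ioi fun r hr => ?_
  have hr : 0 < r := hr
  have h1 : ∀ t, R ^ 2 - 2 * R * (R * r * t) + (R * r) ^ 2 =
      R ^ 2 * (1 - 2 * r * t + r ^ 2) := fun t => by ring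
  simp only [h1, mul_div_cancel_left₀ r hR.ne']
  rw [lintegral_const_mul _ (by fun_prop), lintegral_scaled_psiKernel N q hR hr.le, abs_of_pos hR]
  have h2 : ENNReal.ofReal R * ENNReal.ofReal ((R * r) ^ (N - 1)) *
      ENNReal.ofReal (R ^ (-((N : ℝ) + q))) =
      ENNReal.ofReal (R ^ (-q)) * ENNReal.ofReal (r ^ (N - 1)) := by
    rw [← ENNReal.ofReal_mul (by positivity), ← ENNReal.ofReal_mul (by positivity),
      ← ENNReal.ofReal_mul (by positivity)]
    congr 1
    have h3 : R * R ^ (N - 1) = R ^ (N : ℝ) := by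
      rw [← pow_succ', Nat.sub_add_cancel hN, Real.rpow_natCast]
    have h4 : R ^ (N : ℝ) * R ^ (-((N : ℝ) + q)) = R ^ (-q) := by
      rw [← Real.rpow_add hR]
      congr 1
      ring
    rw [mul_pow, ← h4, ← h3]
    ring
  calc _ = (ENNReal.ofReal R * ENNReal.ofReal ((R * r) ^ (N - 1)) *
      ENNReal.ofReal (R ^ (-((N : ℝ) + q)))) * (g r * psiKernel N q r) := by ring
    _ = _ := by rw [h2]; ring

lemma lintegral_comp_inv_psiKernel (N : ℕ) (hN : 1 ≤ N) (q : ℝ) (g : ℝ → ENNReal) :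
    ∫⁻ r in Ioi (0 : ℝ), ENNReal.ofReal (r ^ (N - 1)) * g r⁻¹ * psiKernel N q r =
      ∫⁻ r in Ioi (0 : ℝ), ENNReal.ofReal (r ^ (q - 1)) * g r * psiKernel N q r := by
  have himg : (fun r : ℝ => r⁻¹) '' Ioi (0 : ℝ) = Ioi 0 := by
    ext r
    constructor
    · rintro ⟨a, ha, rfl⟩
      exact inv_pos.2 (mem_Ioi.1 ha)
    · intro h
      exact ⟨r⁻¹, inv_pos.2 (mem_Ioi.1 h), inv_inv r⟩
  conv_lhs => rw [← himg]
  rw [lintegral_image_eq_lintegral_abs_deriv_mul measurableSet_Ioi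
    (f := fun r : ℝ => r⁻¹) (f' := fun r => -(r ^ 2)⁻¹)
    (fun r hr => (hasDerivAt_inv (ne_of_gt hr)).hasDerivWithinAt) inv_injective.injOn]
  refine setLIntegral_congr_fun measurableSet_Ioi fun r hr => ?_
  have hr : 0 < r := hr
  simp only [inv_inv]
  rw [psiKernel_inv N q hr, abs_neg, abs_of_pos (by positivity)]
  have h2 : ENNReal.ofReal (r ^ 2)⁻¹ * ENNReal.ofReal (r⁻¹ ^ (N - 1)) *
      ENNReal.ofReal (r ^ ((N : ℝ) + q)) = ENNReal.ofReal (r ^ (q - 1)) := by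
    rw [← ENNReal.ofReal_mul (by positivity), ← ENNReal.ofReal_mul (by positivity)]
    congr 1
    have h3 : (r ^ 2)⁻¹ * r⁻¹ ^ (N - 1) = r ^ (-((N : ℝ) + 1)) := by
      rw [inv_pow, ← mul_inv, ← pow_add, show 2 + (N - 1) = N + 1 by omega, Real.rpow_neg hr.le]
      congr 1
      exact_mod_cast (Real.rpow_natCast r (N + 1)).symm
    rw [h3, ← Real.rpow_add hr]
    congr 1
    ring
  calc _ = (ENNReal.ofReal (r ^ 2)⁻¹ * ENNReal.ofReal (r⁻¹ ^ (N - 1)) *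
      ENNReal.ofReal (r ^ ((N : ℝ) + q))) * (g r * psiKernel N q r) := by ring
    _ = _ := by rw [h2]; ring

/-- Convexity inequality behind the ground state substitution. -/
lemma rpow_abs_le_of_convex {p t : ℝ} (hp : 1 ≤ p) (ht : 0 < t) (ht1 : t < 1) (a b : ℝ) :
    (1 - t) ^ (p - 1) * |b| ^ p ≤ |a - b| ^ p + ((1 - t) / t) ^ (p - 1) * |a| ^ p := by
  have hc : 0 < 1 - t := sub_pos.2 ht1
  have hconv := (convexOn_rpow hp).2 (x := |a - b| / (1 - t)) (y := |a| / t)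
    (mem_Ici.2 (by positivity)) (mem_Ici.2 (by positivity)) hc.le ht.le (by ring)
  simp only [smul_eq_mul] at hconv
  rw [mul_div_cancel₀ _ hc.ne', mul_div_cancel₀ _ ht.ne', Real.div_rpow (abs_nonneg _) hc.le,
    Real.div_rpow (abs_nonneg _) ht.le] at hconv
  have hb : |b| ^ p ≤ (|a - b| + |a|) ^ p := by
    refine Real.rpow_le_rpow (abs_nonneg _) ?_ (by linarith)
    have := abs_sub_abs_le_abs_sub b a
    rw [abs_sub_comm] at this
    linarith
  have hcp : (1 - t) ^ p = (1 - t) * (1 - t) ^ (p - 1) := by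
    rw [← Real.rpow_one_add' hc.le (by linarith)]; congr 1; ring
  have htp : t ^ p = t * t ^ (p - 1) := by
    rw [← Real.rpow_one_add' ht.le (by linarith)]; congr 1; ring
  have hc' : 0 < (1 - t) ^ (p - 1) := by positivity
  have ht' : 0 < t ^ (p - 1) := by positivity
  calc (1 - t) ^ (p - 1) * |b| ^ p
      ≤ (1 - t) ^ (p - 1) * ((1 - t) * (|a - b| ^ p / (1 - t) ^ p) + t * (|a| ^ p / t ^ p)) := by
        gcongr
        exact hb.trans hconv
    _ = _ := by
        rw [hcp, htp, Real.div_rpow hc.le ht.le]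
        field_simp

lemma lintegral_Ioo_rpow_ne_top {a R : ℝ} (ha : -1 < a) (hR : 0 < R) :
    ∫⁻ r in Ioo 0 R, ENNReal.ofReal (r ^ a) ≠ ⊤ :=
  (((intervalIntegral.integrableOn_Ioo_rpow_iff hR).2 ha).lintegral_lt_top).ne

lemma lintegral_Ioi_rpow_ne_top {a c : ℝ} (ha : a < -1) (hc : 0 < c) :
    ∫⁻ r in Ioi c, ENNReal.ofReal (r ^ a) ≠ ⊤ :=
  (integrableOn_Ioi_rpow_of_lt ha hc).lintegral_lt_top.ne

lemma ofReal_pow_mul_rpow (N : ℕ) (hN : 1 ≤ N) (a : ℝ) {r : ℝ} (hr : 0 < r) :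
    ENNReal.ofReal (r ^ (N - 1)) * ENNReal.ofReal (r ^ a) =
      ENNReal.ofReal (r ^ ((N : ℝ) - 1 + a)) := by
  rw [← ENNReal.ofReal_mul (by positivity), ← Real.rpow_natCast, ← Real.rpow_add hr,
    Nat.cast_sub hN, Nat.cast_one]

/-- Local integrability of a power of the norm. -/
lemma lintegral_Iio_norm_rpow_ne_top (N : ℕ) (hN : 1 ≤ N) {a R : ℝ} (ha : -(N : ℝ) < a)
    (hR : 0 < R) :
    ∫⁻ x : EuclideanSpace ℝ (Fin N),
      (Iio R).indicator (fun r => ENNReal.ofReal (r ^ a)) ‖x‖ ≠ ⊤ := by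
  rw [lintegral_comp_norm_heightMeasure N hN _
    (Measurable.indicator (by fun_prop) measurableSet_Iio)]
  refine ENNReal.mul_ne_top ?_ (heightMeasure_univ_ne N hN).2
  have h : ∫⁻ r in Ioi (0 : ℝ), ENNReal.ofReal (r ^ (N - 1)) *
      (Iio R).indicator (fun r => ENNReal.ofReal (r ^ a)) r =
      ∫⁻ r in Ioo 0 R, ENNReal.ofReal (r ^ ((N : ℝ) - 1 + a)) := by
    rw [← Ioi_inter_Iio, inter_comm, ← setLIntegral_indicator measurableSet_Iio]
    refine setLIntegral_congr_fun measurableSet_Ioi fun r hr => ?_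
    by_cases h : r ∈ Iio R
    · simp only [indicator_of_mem h, ofReal_pow_mul_rpow N hN a hr]
    · simp only [indicator_of_notMem h, mul_zero]
  rw [h]
  exact lintegral_Ioo_rpow_ne_top (by linarith) hR

/-- Integrability at infinity of a power of the norm. -/
lemma lintegral_Ioi_norm_rpow_ne_top (N : ℕ) (hN : 1 ≤ N) {a R : ℝ} (ha : a < -(N : ℝ))
    (hR : 0 < R) :
    ∫⁻ x : EuclideanSpace ℝ (Fin N),
      (Ioi R).indicator (fun r => ENNReal.ofReal (r ^ a)) ‖x‖ ≠ ⊤ := by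
  rw [lintegral_comp_norm_heightMeasure N hN _
    (Measurable.indicator (by fun_prop) measurableSet_Ioi)]
  refine ENNReal.mul_ne_top ?_ (heightMeasure_univ_ne N hN).2
  have h : ∫⁻ r in Ioi (0 : ℝ), ENNReal.ofReal (r ^ (N - 1)) *
      (Ioi R).indicator (fun r => ENNReal.ofReal (r ^ a)) r =
      ∫⁻ r in Ioi R, ENNReal.ofReal (r ^ ((N : ℝ) - 1 + a)) := by
    rw [← inter_eq_left.2 (Ioi_subset_Ioi hR.le), ← setLIntegral_indicator measurableSet_Ioi,
      inter_eq_left.2 (Ioi_subset_Ioi hR.le)]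
    refine setLIntegral_congr_fun measurableSet_Ioi fun r hr => ?_
    by_cases h : r ∈ Ioi R
    · simp only [indicator_of_mem h, ofReal_pow_mul_rpow N hN a hr]
    · simp only [indicator_of_notMem h, mul_zero]
  rw [h]
  exact lintegral_Ioi_rpow_ne_top (by linarith) hR

lemma lintegral_hardy_ne_top (N : ℕ) (hN : 1 ≤ N) {p q : ℝ} (hp : 1 ≤ p) (hqN : q < N)
    {u : EuclideanSpace ℝ (Fin N) → ℝ} (hu : Continuous u) (hsupp : HasCompactSupport u) :
    ∫⁻ x, ENNReal.ofReal (|u x| ^ p) * ENNReal.ofReal (‖x‖ ^ (-q)) ≠ ⊤ := by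
  obtain ⟨M, hM⟩ := hsupp.exists_bound_of_continuous hu
  obtain ⟨R, hR0, hR⟩ := hsupp.isCompact.isBounded.subset_ball_lt 0 0
  have hle : ∫⁻ x, ENNReal.ofReal (|u x| ^ p) * ENNReal.ofReal (‖x‖ ^ (-q)) ≤
      ∫⁻ x : EuclideanSpace ℝ (Fin N), ENNReal.ofReal (M ^ p) *
        (Iio R).indicator (fun r => ENNReal.ofReal (r ^ (-q))) ‖x‖ := by
    refine lintegral_mono fun x => ?_
    by_cases hx : x ∈ tsupport u
    · have hxR : ‖x‖ ∈ Iio R := by simpa using hR hx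
      rw [indicator_of_mem hxR]
      gcongr
      exact hM x
    · rw [image_eq_zero_of_notMem_tsupport hx, abs_zero, Real.zero_rpow (by linarith)]
      simp
  refine ne_top_of_le_ne_top ?_ hle
  rw [lintegral_const_mul' _ _ ENNReal.ofReal_ne_top]
  exact ENNReal.mul_ne_top ENNReal.ofReal_ne_top
    (lintegral_Iio_norm_rpow_ne_top N hN (by linarith) hR0)

lemma lintegral_gagliardo_ne_top (N : ℕ) (hN : 1 ≤ N) {p q : ℝ} (hp : 1 ≤ p) (hq : 0 < q)
    (hqp : q < p) {u : EuclideanSpace ℝ (Fin N) → ℝ} (hu : ContDiff ℝ 1 u)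
    (hsupp : HasCompactSupport u) :
    ∫⁻ x, ∫⁻ y, ENNReal.ofReal (|u x - u y| ^ p) *
      ENNReal.ofReal (‖x - y‖ ^ (-((N : ℝ) + q))) ≠ ⊤ := by
  obtain ⟨M, hM⟩ := hsupp.exists_bound_of_continuous hu.continuous
  obtain ⟨L, hL⟩ := hu.lipschitzWith_of_hasCompactSupport hsupp one_ne_zero
  set B := tsupport u with hBdef
  have hBm : MeasurableSet B := (isClosed_tsupport u).measurableSet
  have hBfin : volume B ≠ ⊤ := hsupp.isCompact.measure_lt_top.ne
  set m : ℝ → ENNReal := fun r =>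
    ENNReal.ofReal ((L : ℝ) ^ p) *
      (Iio 1).indicator (fun r => ENNReal.ofReal (r ^ (p - ((N : ℝ) + q)))) r +
    ENNReal.ofReal ((M + M) ^ p) *
      (Ioi (1 / 2)).indicator (fun r => ENNReal.ofReal (r ^ (-((N : ℝ) + q)))) r with hm
  have hmm : Measurable m :=
    ((Measurable.indicator (by fun_prop) measurableSet_Iio).const_mul _).add
      ((Measurable.indicator (by fun_prop) measurableSet_Ioi).const_mul _)
  have hK : ∫⁻ z : EuclideanSpace ℝ (Fin N), m ‖z‖ ≠ ⊤ := by
    simp only [hm]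
    rw [lintegral_add_left, lintegral_const_mul' _ _ ENNReal.ofReal_ne_top,
      lintegral_const_mul' _ _ ENNReal.ofReal_ne_top]
    · exact ENNReal.add_ne_top.2 ⟨ENNReal.mul_ne_top ENNReal.ofReal_ne_top
        (lintegral_Iio_norm_rpow_ne_top N hN (by linarith) one_pos),
        ENNReal.mul_ne_top ENNReal.ofReal_ne_top
        (lintegral_Ioi_norm_rpow_ne_top N hN (by linarith) (by norm_num))⟩
    · exact ((Measurable.indicator (by fun_prop) measurableSet_Iio).comp
        measurable_norm).const_mul _
  have hD : ∀ x y, ENNReal.ofReal (|u x - u y| ^ p) *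
      ENNReal.ofReal (‖x - y‖ ^ (-((N : ℝ) + q))) ≤ m ‖x - y‖ := by
    intro x y
    rcases eq_or_ne x y with rfl | hxy
    · simp [Real.zero_rpow (by linarith : p ≠ 0)]
    have hr : 0 < ‖x - y‖ := norm_pos_iff.2 (sub_ne_zero.2 hxy)
    rcases lt_or_ge ‖x - y‖ 1 with h1 | h1
    · refine le_add_right ?_
      rw [indicator_of_mem (mem_Iio.2 h1), ← ENNReal.ofReal_mul (by positivity),
        ← ENNReal.ofReal_mul (by positivity)]
      refine ENNReal.ofReal_le_ofReal ?_
      have hl : |u x - u y| ≤ L * ‖x - y‖ := by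
        simpa [dist_eq_norm] using hL.dist_le_mul x y
      rw [sub_eq_add_neg p, Real.rpow_add hr, ← mul_assoc, ← Real.mul_rpow (by positivity) hr.le]
      gcongr
    · refine le_add_left ?_
      rw [indicator_of_mem (mem_Ioi.2 (by linarith))]
      gcongr
      exact (abs_sub _ _).trans (add_le_add (hM x) (hM y))
  have hD' : ∀ x y, ENNReal.ofReal (|u x - u y| ^ p) *
      ENNReal.ofReal (‖x - y‖ ^ (-((N : ℝ) + q))) ≤
      B.indicator 1 x * m ‖x - y‖ + B.indicator 1 y * m ‖x - y‖ := by
    intro x y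
    by_cases hx : x ∈ B
    · refine le_add_right ?_
      simpa [indicator_of_mem hx] using hD x y
    by_cases hy : y ∈ B
    · refine le_add_left ?_
      simpa [indicator_of_mem hy] using hD x y
    · rw [image_eq_zero_of_notMem_tsupport hx, image_eq_zero_of_notMem_tsupport hy]
      simp [Real.zero_rpow (by linarith : p ≠ 0)]
  have hi : Measurable (B.indicator (1 : EuclideanSpace ℝ (Fin N) → ENNReal)) :=
    measurable_one.indicator hBm
  have hslice : ∀ x : EuclideanSpace ℝ (Fin N),
      ∫⁻ y, B.indicator 1 x * m ‖x - y‖ =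
        B.indicator 1 x * ∫⁻ z : EuclideanSpace ℝ (Fin N), m ‖z‖ := by
    intro x
    rw [lintegral_const_mul _ (by fun_prop),
      lintegral_sub_left_eq_self (fun z : EuclideanSpace ℝ (Fin N) => m ‖z‖) x]
  have htot : ∫⁻ x : EuclideanSpace ℝ (Fin N), ∫⁻ y, B.indicator 1 x * m ‖x - y‖ ≠ ⊤ := by
    simp only [hslice]
    rw [lintegral_mul_const _ hi, lintegral_indicator_one hBm]
    exact ENNReal.mul_ne_top hBfin hK
  have hswap : ∫⁻ x : EuclideanSpace ℝ (Fin N), ∫⁻ y, B.indicator 1 y * m ‖x - y‖ =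
      ∫⁻ x : EuclideanSpace ℝ (Fin N), ∫⁻ y, B.indicator 1 x * m ‖x - y‖ := by
    rw [lintegral_lintegral_swap (by fun_prop)]
    simp only [norm_sub_rev]
  refine ne_top_of_le_ne_top ?_
    (lintegral_mono fun x => lintegral_mono fun y => hD' x y)
  have hadd : ∀ x : EuclideanSpace ℝ (Fin N),
      ∫⁻ y, (B.indicator 1 x * m ‖x - y‖ + B.indicator 1 y * m ‖x - y‖) =
      (∫⁻ y, B.indicator 1 x * m ‖x - y‖) + ∫⁻ y, B.indicator 1 y * m ‖x - y‖ := fun x =>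
    lintegral_add_left (by fun_prop) _
  simp only [hadd]
  rw [lintegral_add_left (Measurable.lintegral_prod_right' (f := fun z :
    EuclideanSpace ℝ (Fin N) × EuclideanSpace ℝ (Fin N) => B.indicator 1 z.1 * m ‖z.1 - z.2‖)
    (by fun_prop)), hswap]
  exact ENNReal.add_ne_top.2 ⟨htot, htot⟩

/-- The sharp Hardy inequality with the constant truncated to ratios `‖y‖ / ‖x‖ < δ`. -/
lemma hardy_truncated (N : ℕ) (hN : 1 ≤ N) {p q δ : ℝ} (hp : 1 ≤ p) (hq : 0 < q) (hqN : q < N)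
    (hδ : 0 < δ) (hδ1 : δ < 1) {u : EuclideanSpace ℝ (Fin N) → ℝ} (hu : Measurable u)
    (hfin : ∫⁻ x, ENNReal.ofReal (|u x| ^ p) * ENNReal.ofReal (‖x‖ ^ (-q)) ≠ ⊤) :
    2 * ((∫⁻ r in Ioo 0 δ, ENNReal.ofReal (r ^ (q - 1) * |1 - r ^ (((N : ℝ) - q) / p)| ^ p) *
        psiKernel N q r) *
        ∫⁻ x, ENNReal.ofReal (|u x| ^ p) * ENNReal.ofReal (‖x‖ ^ (-q))) ≤
      ∫⁻ x, ∫⁻ y, ENNReal.ofReal (|u x - u y| ^ p) *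
        ENNReal.ofReal (‖x - y‖ ^ (-((N : ℝ) + q))) := by
  have : NeZero N := ⟨by omega⟩
  set α := ((N : ℝ) - q) / p with hα
  have hp0 : 0 < p := by linarith
  have hα0 : 0 < α := div_pos (by linarith) hp0
  have hαp : α * p = N - q := div_mul_cancel₀ _ hp0.ne'
  set U : EuclideanSpace ℝ (Fin N) → ENNReal := fun x => ENNReal.ofReal (|u x| ^ p) with hU
  set k : EuclideanSpace ℝ (Fin N) → EuclideanSpace ℝ (Fin N) → ENNReal :=
    fun x y => ENNReal.ofReal (‖x - y‖ ^ (-((N : ℝ) + q))) with hk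
  set D : EuclideanSpace ℝ (Fin N) → EuclideanSpace ℝ (Fin N) → ENNReal :=
    fun x y => ENNReal.ofReal (|u x - u y| ^ p) * k x y with hD
  set H := ∫⁻ x, U x * ENNReal.ofReal (‖x‖ ^ (-q)) with hH
  set g₀ : ℝ → ENNReal := (Ioo 0 δ).indicator 1 with hg₀
  set g₁ : ℝ → ENNReal :=
    (Ioo 0 δ).indicator fun r => ENNReal.ofReal ((1 - r ^ α) ^ (p - 1)) with hg₁
  set g₂ : ℝ → ENNReal :=
    (Ioo 0 δ).indicator fun r => ENNReal.ofReal (((1 - r ^ α) / r ^ α) ^ (p - 1)) with hg₂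
  have hg₀m : Measurable g₀ := measurable_one.indicator measurableSet_Ioo
  have hg₁m : Measurable g₁ := Measurable.indicator (by fun_prop) measurableSet_Ioo
  have hg₂m : Measurable g₂ := Measurable.indicator (by fun_prop) measurableSet_Ioo
  have hUm : Measurable U := by fun_prop
  have hksymm : ∀ x y, k x y = k y x := fun x y => by simp only [hk, norm_sub_rev]
  have hDsymm : ∀ x y, D x y = D y x := fun x y => by simp only [hD, hksymm x y, abs_sub_comm]
  have hr : ∀ r ∈ Ioo 0 δ, 0 < r ^ α ∧ r ^ α < 1 := fun r h =>
    ⟨Real.rpow_pos_of_pos h.1 _, Real.rpow_lt_one h.1.le (h.2.trans hδ1) hα0⟩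
  have hpt : ∀ x y, g₁ (‖y‖ / ‖x‖) * U y * k x y ≤
      g₀ (‖y‖ / ‖x‖) * D x y + g₂ (‖y‖ / ‖x‖) * U x * k x y := by
    intro x y
    by_cases h : ‖y‖ / ‖x‖ ∈ Ioo 0 δ
    · obtain ⟨ht, ht1⟩ := hr _ h
      have hc : 0 < 1 - (‖y‖ / ‖x‖) ^ α := sub_pos.2 ht1
      simp only [hg₀, hg₁, hg₂, indicator_of_mem h, Pi.one_apply, one_mul, hD]
      rw [← add_mul]
      gcongr
      simp only [hU]
      rw [← ENNReal.ofReal_mul (by positivity), ← ENNReal.ofReal_mul (by positivity),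
        ← ENNReal.ofReal_add (by positivity) (by positivity)]
      exact ENNReal.ofReal_le_ofReal (rpow_abs_le_of_convex hp ht ht1 _ _)
    · simp [hg₁, indicator_of_notMem h]
  set A := ∫⁻ r in Ioi (0 : ℝ), ENNReal.ofReal (r ^ (q - 1)) * g₁ r * psiKernel N q r with hA
  set B := ∫⁻ r in Ioi (0 : ℝ), ENNReal.ofReal (r ^ (N - 1)) * g₂ r * psiKernel N q r with hB
  set I := ∫⁻ r in Ioo 0 δ, ENNReal.ofReal (r ^ (q - 1) * |1 - r ^ α| ^ p) *
    psiKernel N q r with hI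
  have hae : ∀ᵐ x : EuclideanSpace ℝ (Fin N), x ≠ 0 := by
    simp [ae_iff]
  have hΨ := measurable_psiKernel N hN q
  have hAint : ∫⁻ x, ∫⁻ y, g₁ (‖y‖ / ‖x‖) * U y * k x y = A * H := by
    rw [lintegral_lintegral_swap (by simp only [hk, Function.uncurry_def]; fun_prop), hH,
      ← lintegral_const_mul _ (by fun_prop)]
    refine lintegral_congr_ae ?_
    filter_upwards [hae] with y hy
    have h := lintegral_ratio_kernel N hN q (fun r => g₁ r⁻¹) (by fun_prop) hy
    rw [lintegral_comp_inv_psiKernel N hN q g₁] at h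
    calc ∫⁻ x, g₁ (‖y‖ / ‖x‖) * U y * k x y
        = ∫⁻ x, U y * (g₁ (‖x‖ / ‖y‖)⁻¹ * ENNReal.ofReal (‖y - x‖ ^ (-((N : ℝ) + q)))) := by
          refine lintegral_congr fun x => ?_
          rw [inv_div, hksymm]
          ring
      _ = _ := by
          rw [lintegral_const_mul' _ _ ENNReal.ofReal_ne_top, h]
          ring
  have hBint : ∫⁻ x, ∫⁻ y, g₂ (‖y‖ / ‖x‖) * U x * k x y = B * H := by
    rw [hH, ← lintegral_const_mul _ (by fun_prop)]
    refine lintegral_congr_ae ?_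
    filter_upwards [hae] with x hx
    have h := lintegral_ratio_kernel N hN q g₂ hg₂m hx
    calc ∫⁻ y, g₂ (‖y‖ / ‖x‖) * U x * k x y
        = ∫⁻ y, U x * (g₂ (‖y‖ / ‖x‖) * ENNReal.ofReal (‖x - y‖ ^ (-((N : ℝ) + q)))) := by
          refine lintegral_congr fun y => ?_
          ring
      _ = _ := by
          rw [lintegral_const_mul' _ _ ENNReal.ofReal_ne_top, h]
          ring
  have hset : ∀ f : ℝ → ENNReal,
      ∫⁻ r in Ioo 0 δ, f r = ∫⁻ r in Ioi 0, (Ioo 0 δ).indicator f r := fun f => by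
    rw [setLIntegral_indicator measurableSet_Ioo, inter_eq_left.2 Ioo_subset_Ioi_self]
  have hAIB : A = I + B := by
    rw [hI, hset, hB, hA, ← lintegral_add_right _ (by fun_prop)]
    refine setLIntegral_congr_fun measurableSet_Ioi fun r hr0 => ?_
    have hr0 : 0 < r := hr0
    by_cases h : r ∈ Ioo 0 δ
    · obtain ⟨ht, ht1⟩ := hr _ h
      have hc : 0 < 1 - r ^ α := sub_pos.2 ht1
      simp only [hg₁, hg₂, indicator_of_mem h]
      rw [← add_mul, ← ENNReal.ofReal_mul (by positivity), ← ENNReal.ofReal_mul (by positivity),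
        ← ENNReal.ofReal_add (by positivity) (by positivity), abs_of_pos hc]
      congr 2
      have h1 : (1 - r ^ α) ^ p = (1 - r ^ α) * (1 - r ^ α) ^ (p - 1) := by
        rw [← Real.rpow_one_add' hc.le (by linarith)]; congr 1; ring
      have h2 : r ^ (N - 1) = r ^ (q - 1) * r ^ α * (r ^ α) ^ (p - 1) := by
        rw [← Real.rpow_natCast, ← Real.rpow_mul hr0.le, ← Real.rpow_add hr0,
          ← Real.rpow_add hr0, Nat.cast_sub hN]
        congr 1
        push_cast
        linarith
      have h3 : (r ^ α) ^ (p - 1) ≠ 0 := by positivity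
      rw [h1, h2, Real.div_rpow hc.le ht.le]
      field_simp
      ring
    · simp [hg₁, hg₂, indicator_of_notMem h]
  have hAfin : A ≠ ⊤ := by
    have hle : A ≤ ∫⁻ r in Ioo 0 δ, ENNReal.ofReal (r ^ (q - 1)) *
        (ENNReal.ofReal ((1 - δ) ^ (-((N : ℝ) + q))) * heightMeasure N univ) := by
      rw [hA, hset]
      refine lintegral_mono fun r => ?_
      by_cases h : r ∈ Ioo 0 δ
      · obtain ⟨ht, ht1⟩ := hr _ h
        simp only [hg₁, indicator_of_mem h]
        refine mul_le_mul' ?_ (psiKernel_le N hq.le h.1.le h.2.le hδ1)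
        refine mul_le_of_le_one_right' ?_
        rw [ENNReal.ofReal_le_one]
        exact Real.rpow_le_one (by linarith) (by linarith) (by linarith)
      · simp [hg₁, indicator_of_notMem h]
    have hc : ENNReal.ofReal ((1 - δ) ^ (-((N : ℝ) + q))) * heightMeasure N univ ≠ ⊤ :=
      ENNReal.mul_ne_top ENNReal.ofReal_ne_top (heightMeasure_univ_ne N hN).2
    refine ne_top_of_le_ne_top ?_ hle
    rw [lintegral_mul_const' _ _ hc]
    exact ENNReal.mul_ne_top (lintegral_Ioo_rpow_ne_top (by linarith) hδ) hc
  have hBfin : B ≠ ⊤ := ne_top_of_le_ne_top hAfin (hAIB ▸ le_add_self)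
  set P := ∫⁻ x, ∫⁻ y, g₀ (‖y‖ / ‖x‖) * D x y with hP
  have hPm : Measurable fun x => ∫⁻ y, g₀ (‖y‖ / ‖x‖) * D x y :=
    Measurable.lintegral_prod_right' (f := fun z :
      EuclideanSpace ℝ (Fin N) × EuclideanSpace ℝ (Fin N) =>
      g₀ (‖z.2‖ / ‖z.1‖) * D z.1 z.2) (by simp only [hD, hk]; fun_prop)
  have hPE : 2 * P ≤ ∫⁻ x, ∫⁻ y, D x y := by
    have hP' : P = ∫⁻ x, ∫⁻ y, g₀ (‖x‖ / ‖y‖) * D x y := by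
      rw [hP, lintegral_lintegral_swap (by simp only [hD, hk, Function.uncurry_def]; fun_prop)]
      simp only [hDsymm]
    rw [two_mul]
    nth_rw 2 [hP']
    rw [hP, ← lintegral_add_left hPm]
    refine lintegral_mono fun x => ?_
    simp only
    rw [← lintegral_add_left (by simp only [hD, hk]; fun_prop)]
    refine lintegral_mono fun y => ?_
    simp only
    rw [← add_mul]
    refine mul_le_of_le_one_left' ?_
    by_cases h : ‖y‖ / ‖x‖ ∈ Ioo 0 δ
    · have h' : ‖x‖ / ‖y‖ ∉ Ioo 0 δ := fun h' => by
        have h1 := mul_lt_mul'' (h.2.trans hδ1) (h'.2.trans hδ1) h.1.le h'.1.le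
        have hx : ‖x‖ ≠ 0 := fun h0 => by simp [h0] at h
        have hy : ‖y‖ ≠ 0 := fun h0 => by simp [h0] at h
        rw [div_mul_div_comm, mul_comm ‖x‖, div_self (mul_ne_zero hy hx)] at h1
        linarith
      simp [hg₀, indicator_of_mem h, indicator_of_notMem h']
    · simp only [hg₀, indicator_of_notMem h, zero_add]
      exact indicator_le_self' (fun _ _ => zero_le) _
  have hmain : A * H ≤ P + B * H := by
    rw [← hAint, ← hBint, hP]
    rw [← lintegral_add_left hPm]
    refine lintegral_mono fun x => ?_
    simp only
    rw [← lintegral_add_left (by simp only [hD, hk]; fun_prop)]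
    exact lintegral_mono fun y => hpt x y
  rw [hAIB, add_mul] at hmain
  have hIP : I * H ≤ P :=
    (ENNReal.add_le_add_iff_right (ENNReal.mul_ne_top hBfin hfin)).1 hmain
  exact (mul_le_mul_right hIP 2).trans hPE

/-- The sharp fractional Hardy inequality in extended nonnegative numbers. -/
lemma hardy_lintegral (N : ℕ) (hN : 1 ≤ N) {p q : ℝ} (hp : 1 ≤ p) (hq : 0 < q) (hqN : q < N)
    {u : EuclideanSpace ℝ (Fin N) → ℝ} (hu : Measurable u)
    (hfin : ∫⁻ x, ENNReal.ofReal (|u x| ^ p) * ENNReal.ofReal (‖x‖ ^ (-q)) ≠ ⊤) :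
    2 * ((∫⁻ r in Ioo 0 1, ENNReal.ofReal (r ^ (q - 1) * |1 - r ^ (((N : ℝ) - q) / p)| ^ p) *
        psiKernel N q r) *
        ∫⁻ x, ENNReal.ofReal (|u x| ^ p) * ENNReal.ofReal (‖x‖ ^ (-q))) ≤
      ∫⁻ x, ∫⁻ y, ENNReal.ofReal (|u x - u y| ^ p) *
        ENNReal.ofReal (‖x - y‖ ^ (-((N : ℝ) + q))) := by
  set δ : ℕ → ℝ := fun n => 1 - 1 / ((n : ℝ) + 2) with hδ
  have hmono : Monotone δ := fun m n hmn => by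
    simp only [hδ]
    have : (m : ℝ) ≤ n := by exact_mod_cast hmn
    gcongr
  have hδ0 : ∀ n, 0 < δ n := fun n => by
    have h2 : (1 : ℝ) < (n : ℝ) + 2 := by have := n.cast_nonneg (α := ℝ); linarith
    simp only [hδ, sub_pos]
    exact (div_lt_one (by linarith)).2 h2
  have hδ1 : ∀ n, δ n < 1 := fun n => by
    simp only [hδ, sub_lt_self_iff]
    positivity
  have hunion : Ioo (0 : ℝ) 1 = ⋃ n, Ioo 0 (δ n) := by
    ext r
    simp only [mem_iUnion, mem_Ioo]
    constructor
    · rintro ⟨h0, h1⟩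
      obtain ⟨n, hn⟩ := exists_nat_gt (1 / (1 - r))
      refine ⟨n, h0, ?_⟩
      have h1' : 0 < 1 - r := sub_pos.2 h1
      have : 1 / ((n : ℝ) + 2) < 1 - r := by
        rw [div_lt_iff₀ h1'] at hn
        rw [div_lt_iff₀ (by positivity)]
        nlinarith
      simp only [hδ]
      linarith
    · rintro ⟨n, h0, h1⟩
      exact ⟨h0, h1.trans (hδ1 n)⟩
  rw [hunion, setLIntegral_iUnion_of_directed _
    (Monotone.directed_le fun m n hmn => Ioo_subset_Ioo_right (hmono hmn)),
    ENNReal.iSup_mul, ENNReal.mul_iSup]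
  exact iSup_le fun n => hardy_truncated N hN hp hq hqN (hδ0 n) (hδ1 n) hu hfin

lemma integral_hardy_eq_toReal {N : ℕ} {p q : ℝ} {u : EuclideanSpace ℝ (Fin N) → ℝ}
    (hu : Measurable u) :
    ∫ x : EuclideanSpace ℝ (Fin N), |u x| ^ p / ‖x‖ ^ q =
      (∫⁻ x, ENNReal.ofReal (|u x| ^ p) * ENNReal.ofReal (‖x‖ ^ (-q))).toReal := by
  rw [integral_eq_lintegral_of_nonneg_ae
    (.of_forall fun x => by simp only [Pi.zero_apply]; positivity)
    (Measurable.aestronglyMeasurable (by fun_prop))]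
  congr 1
  refine lintegral_congr fun x => ?_
  rw [← ENNReal.ofReal_mul (by positivity), Real.rpow_neg (norm_nonneg _), div_eq_mul_inv]

lemma integral_gagliardo_eq_toReal {N : ℕ} {p a : ℝ} {u : EuclideanSpace ℝ (Fin N) → ℝ}
    (hu : Measurable u)
    (hfin : ∫⁻ x, ∫⁻ y, ENNReal.ofReal (|u x - u y| ^ p) * ENNReal.ofReal (‖x - y‖ ^ (-a)) ≠ ⊤) :
    ∫ x : EuclideanSpace ℝ (Fin N), ∫ y : EuclideanSpace ℝ (Fin N),
        |u x - u y| ^ p / ‖x - y‖ ^ a =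
      (∫⁻ x, ∫⁻ y, ENNReal.ofReal (|u x - u y| ^ p) * ENNReal.ofReal (‖x - y‖ ^ (-a))).toReal := by
  have hinner : ∀ x : EuclideanSpace ℝ (Fin N),
      ∫ y : EuclideanSpace ℝ (Fin N), |u x - u y| ^ p / ‖x - y‖ ^ a =
      (∫⁻ y, ENNReal.ofReal (|u x - u y| ^ p) * ENNReal.ofReal (‖x - y‖ ^ (-a))).toReal := by
    intro x
    rw [integral_eq_lintegral_of_nonneg_ae
      (.of_forall fun y => by simp only [Pi.zero_apply]; positivity)
      (Measurable.aestronglyMeasurable (by fun_prop))]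
    congr 1
    refine lintegral_congr fun y => ?_
    rw [← ENNReal.ofReal_mul (by positivity), Real.rpow_neg (norm_nonneg _), div_eq_mul_inv]
  have hm : Measurable fun x : EuclideanSpace ℝ (Fin N) =>
      ∫⁻ y, ENNReal.ofReal (|u x - u y| ^ p) * ENNReal.ofReal (‖x - y‖ ^ (-a)) :=
    Measurable.lintegral_prod_right' (f := fun z :
      EuclideanSpace ℝ (Fin N) × EuclideanSpace ℝ (Fin N) =>
      ENNReal.ofReal (|u z.1 - u z.2| ^ p) * ENNReal.ofReal (‖z.1 - z.2‖ ^ (-a))) (by fun_prop)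
  simp only [hinner]
  exact integral_toReal hm.aemeasurable (ae_lt_top hm hfin)

lemma fracLambda_eq (N : ℕ) (hN : 1 ≤ N) {s p : ℝ} (hq : 0 < s * p) :
    fracLambda N s p = (2 * (∫⁻ r in Ioo 0 1,
      ENNReal.ofReal (r ^ (s * p - 1) * |1 - r ^ (((N : ℝ) - s * p) / p)| ^ p) *
        psiKernel N (s * p) r).toReal)⁻¹ := by
  have hΨ := measurable_psiKernel N hN (s * p)
  rw [fracLambda, ← integral_toReal (by fun_prop)]
  · congr 2
    refine setIntegral_congr_fun measurableSet_Ioo fun r hr => ?_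
    have h0 : 0 < r := hr.1
    rw [fracPsi_eq_toReal N hN s p hr, ENNReal.toReal_mul, ENNReal.toReal_ofReal (by positivity)]
  · filter_upwards [ae_restrict_mem measurableSet_Ioo] with r hr
    refine ENNReal.mul_lt_top ENNReal.ofReal_lt_top ?_
    exact (psiKernel_le N hq.le hr.1.le le_rfl hr.2).trans_lt
      (ENNReal.mul_lt_top ENNReal.ofReal_lt_top (heightMeasure_univ_ne N hN).2.lt_top)

lemma lintegral_hardyConstant_ne_zero (N : ℕ) (hN : 1 ≤ N) {p q : ℝ} (hp : 1 ≤ p)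
    (hqN : q < N) :
    ∫⁻ r in Ioo 0 1, ENNReal.ofReal (r ^ (q - 1) * |1 - r ^ (((N : ℝ) - q) / p)| ^ p) *
        psiKernel N q r ≠ 0 := by
  have hΨ := measurable_psiKernel N hN q
  intro h
  rw [setLIntegral_eq_zero_iff measurableSet_Ioo (by fun_prop)] at h
  have hF : ∀ᵐ r : ℝ, r ∉ Ioo (0 : ℝ) 1 := by
    filter_upwards [h] with r h hr
    have h0 : 0 < r := hr.1
    have hlt : r ^ (((N : ℝ) - q) / p) < 1 :=
      Real.rpow_lt_one hr.1.le hr.2 (div_pos (by linarith) (by linarith))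
    have hc : 0 < |1 - r ^ (((N : ℝ) - q) / p)| := abs_pos.2 (sub_pos.2 hlt).ne'
    rcases mul_eq_zero.1 (h hr) with h1 | h1
    · rw [ENNReal.ofReal_eq_zero] at h1
      have : 0 < r ^ (q - 1) * |1 - r ^ (((N : ℝ) - q) / p)| ^ p := by positivity
      linarith
    · exact psiKernel_ne_zero N hN q hr.1.le hr.2 h1
  rw [ae_iff] at hF
  simp only [not_not, ofPred_mem_eq, Real.volume_Ioo] at hF
  norm_num at hF

theorem sharp_fractional_hardy
    (N : ℕ) (hN : 1 ≤ N) (p s : ℝ) (hp : 1 ≤ p) (hs : s ∈ Ioo (0 : ℝ) 1)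
    (hsp : s * p < N)
    (u : EuclideanSpace ℝ (Fin N) → ℝ) (hu : ContDiff ℝ (⊤ : ℕ∞) u) (husupp : HasCompactSupport u) :
    ∫ x : EuclideanSpace ℝ (Fin N), |u x| ^ p / ‖x‖ ^ (s * p) ≤
      fracLambda N s p *
        ∫ x : EuclideanSpace ℝ (Fin N), ∫ y : EuclideanSpace ℝ (Fin N), |u x - u y| ^ p / ‖x - y‖ ^ ((N : ℝ) + s * p) := by
  have hq : 0 < s * p := mul_pos hs.1 (by linarith)
  have hqp : s * p < p := by nlinarith [hs.2]
  have hum : Measurable u := hu.continuous.measurable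
  have hHfin := lintegral_hardy_ne_top N hN hp hsp hu.continuous husupp
  have hEfin := lintegral_gagliardo_ne_top N hN hp hq hqp
    (hu.of_le (by exact_mod_cast le_top)) husupp
  have hmain := hardy_lintegral N hN hp hq hsp hum hHfin
  have hI0 := lintegral_hardyConstant_ne_zero N hN hp hsp
  rw [integral_hardy_eq_toReal hum, integral_gagliardo_eq_toReal hum hEfin, fracLambda_eq N hN hq]
  set H := ∫⁻ x, ENNReal.ofReal (|u x| ^ p) * ENNReal.ofReal (‖x‖ ^ (-(s * p)))
  set E := ∫⁻ x, ∫⁻ y, ENNReal.ofReal (|u x - u y| ^ p) *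
    ENNReal.ofReal (‖x - y‖ ^ (-((N : ℝ) + s * p)))
  set I := ∫⁻ r in Ioo 0 1,
    ENNReal.ofReal (r ^ (s * p - 1) * |1 - r ^ (((N : ℝ) - s * p) / p)| ^ p) *
      psiKernel N (s * p) r
  rcases eq_or_ne H 0 with hH | hH
  · rw [hH, ENNReal.toReal_zero]
    positivity
  have hIfin : I ≠ ⊤ := by
    intro h
    rw [h, ENNReal.top_mul hH, ENNReal.mul_top two_ne_zero] at hmain
    exact hEfin (top_le_iff.1 hmain)
  have hIpos : 0 < I.toReal := ENNReal.toReal_pos hI0 hIfin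
  have hreal := ENNReal.toReal_mono hEfin hmain
  simp only [ENNReal.toReal_mul, ENNReal.toReal_ofNat] at hreal
  rw [le_inv_mul_iff₀ (by positivity)]
  linarith

end
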